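/- (Backward propagation bound, spectral version.) There exist absolute constants C, c > 0 such that if m ≥ C·n·L·log(n·L) and d ≤ m/(C·L·log m), then with probability at least 1 − e^{−c·m/L} over the random matrices A, W_1,…,W_L, B: for all i ∈ [n] and all 1 ≤ a ≤ L, ‖vᵀ B D_{i,L} W_L ⋯ D_{i,a} W_a‖ ≤ C·√(m/d)·‖v‖ for every vector v ∈ ℝ^d. -/

import Mathlib

/-!
The proof is a moment computation. For a matrix `N` and a standard Gaussian vector `u`, the
inequality `⟨Nᵀ v, u⟩² ≤ ‖N u‖² ‖v‖²` and the Gaussian moments of `⟨Nᵀ v, u⟩` give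
`p! ‖Nᵀ v‖^(2p) ≤ E_u ‖N u‖^(2p) · ‖v‖^(2p)` for every `v` simultaneously
(`transpose_le_average`). Hence it suffices to bound the expectation of `‖N u‖^(2p)` for the
backward matrix `N = B D_L W_L ⋯ D_a W_a` and to apply Markov's inequality; no net over `v` is
needed.

The expectation is computed by integrating out one matrix at a time. For a layer with nonzero
input `h`, the rows of `W` are i.i.d. and symmetric, so the half-space `⟨w, h⟩ ≥ 0` carries half of
any even integral; together with `S^p ≤ exp (p (S - 1))` this yields
`E ‖D W z‖^(2p) ≤ exp (8 p² / m) ‖z‖^(2p)` for every fixed `z` (`layer_moment`, `chain_moment`).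
The last matrix `B` contributes `p! (4 / d)^p √2^d` (`output_moment`) and the average over `u`
contributes `(e m)^p` (`input_moment`). Taking `p ≈ m / (8 L)`, which is at least `d`, the `L` layer
factors cost only `e^p` altogether and the total is at most `p! (16 e² m / d)^p`. Markov's
inequality shows that `p! (C² m / d)^p` with `C = 4 e⁹` is exceeded with probability at most
`e^(-16 p) ≤ e^(-m / L)`.

The symmetry argument requires a nonzero layer input; a layer with nonzero input has zero output
with probability `2^(-m)`, so vanishing inputs cost at most `L 2^(-m)` per sample (`dead_prob`). A
union bound over the `n L` pairs of a sample and a layer finishes the proof.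
-/

open MeasureTheory ProbabilityTheory

noncomputable section

namespace DNNPaper

/-! ### Elementary linear algebra on plain function matrices -/

def mulVec {p q : ℕ} (M : Fin p → Fin q → ℝ) (v : Fin q → ℝ) : Fin p → ℝ :=
  fun i => ∑ j, M i j * v j

def mmul {p q r : ℕ} (M : Fin p → Fin q → ℝ) (N : Fin q → Fin r → ℝ) :
    Fin p → Fin r → ℝ :=
  fun i k => ∑ j, M i j * N j k

def transpose {p q : ℕ} (M : Fin p → Fin q → ℝ) : Fin q → Fin p → ℝ :=
  fun j i => M i j

def dot {p : ℕ} (u v : Fin p → ℝ) : ℝ := ∑ i, u i * v i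

def outer {p q : ℕ} (u : Fin p → ℝ) (v : Fin q → ℝ) : Fin p → Fin q → ℝ :=
  fun i j => u i * v j

def idMat (p : ℕ) : Fin p → Fin p → ℝ := fun i j => if i = j then 1 else 0

def diagMat {p : ℕ} (dg : Fin p → ℝ) : Fin p → Fin p → ℝ :=
  fun i j => if i = j then dg i else 0

def relu {p : ℕ} (v : Fin p → ℝ) : Fin p → ℝ := fun k => max (v k) 0

/-- diagonal entries of the ReLU sign matrix of a pre-activation vector -/
def signOf {p : ℕ} (g : Fin p → ℝ) : Fin p → ℝ := fun k => if 0 ≤ g k then 1 else 0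

/-- Euclidean norm -/
def l2 {p : ℕ} (v : Fin p → ℝ) : ℝ := Real.sqrt (∑ k, v k ^ 2)

/-- max-norm -/
def linf {p : ℕ} (v : Fin p → ℝ) : ℝ := ⨆ k, |v k|

/-- number of nonzero entries -/
def l0 {p : ℕ} (v : Fin p → ℝ) : ℕ := (Finset.univ.filter fun k => v k ≠ 0).card

/-- Frobenius norm -/
def frob {p q : ℕ} (M : Fin p → Fin q → ℝ) : ℝ := Real.sqrt (∑ i, ∑ j, M i j ^ 2)

/-- spectral norm (ℓ₂ operator norm) -/
def spec {p q : ℕ} (M : Fin p → Fin q → ℝ) : ℝ :=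
  sSup {r | ∃ v : Fin q → ℝ, l2 v ≤ 1 ∧ r = l2 (mulVec M v)}

/-- trace (Frobenius) inner product -/
def innerF {p q : ℕ} (M N : Fin p → Fin q → ℝ) : ℝ := ∑ i, ∑ j, M i j * N i j

/-- `‖W‖₂ = max_ℓ ‖W_ℓ‖₂` for a tuple of matrices -/
def tupleSpec {m L : ℕ} (W : Fin L → Fin m → Fin m → ℝ) : ℝ := ⨆ ℓ, spec (W ℓ)

/-! ### The network -/

variable {𝔡 m d L : ℕ}

/-- `Wat W ℓ` is the weight matrix of layer `ℓ ∈ {1,…,L}` (identity outside this range). -/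
def Wat (W : Fin L → Fin m → Fin m → ℝ) (ℓ : ℕ) : Fin m → Fin m → ℝ :=
  if h : 1 ≤ ℓ ∧ ℓ ≤ L then W ⟨ℓ - 1, by omega⟩ else idMat m

/-- the forward (post-activation) vectors `h_ℓ`, `ℓ = 0,1,…,L` -/
def hseq (A : Fin m → Fin 𝔡 → ℝ) (W : Fin L → Fin m → Fin m → ℝ) (x : Fin 𝔡 → ℝ) :
    ℕ → Fin m → ℝ
  | 0 => relu (mulVec A x)
  | ℓ + 1 =>
      if ℓ + 1 ≤ L then relu (mulVec (Wat W (ℓ + 1)) (hseq A W x ℓ)) else hseq A W x ℓ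

/-- the pre-activation vectors `g_ℓ`, `ℓ = 0,1,…,L` -/
def gseq (A : Fin m → Fin 𝔡 → ℝ) (W : Fin L → Fin m → Fin m → ℝ) (x : Fin 𝔡 → ℝ) :
    ℕ → Fin m → ℝ
  | 0 => mulVec A x
  | ℓ + 1 => mulVec (Wat W (ℓ + 1)) (hseq A W x ℓ)

/-- `chainProd W Dfun a b = (D_b W_b) (D_{b-1} W_{b-1}) ⋯ (D_a W_a)` where `D_ℓ` is the
diagonal matrix with entries `Dfun ℓ`; it is the identity when `b < a`, and factors with
index outside `{1,…,L}` are skipped. -/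
def chainProd (W : Fin L → Fin m → Fin m → ℝ) (Dfun : ℕ → Fin m → ℝ) (a : ℕ) :
    ℕ → Fin m → Fin m → ℝ
  | 0 => idMat m
  | b + 1 =>
      if a ≤ b + 1 ∧ b + 1 ≤ L then
        mmul (mmul (diagMat (Dfun (b + 1))) (Wat W (b + 1))) (chainProd W Dfun a b)
      else chainProd W Dfun a b

/-- `prodDW A W x a b = D_b W_b D_{b-1} W_{b-1} ⋯ D_a W_a` with the sign matrices of input `x` -/
def prodDW (A : Fin m → Fin 𝔡 → ℝ) (W : Fin L → Fin m → Fin m → ℝ) (x : Fin 𝔡 → ℝ)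
    (a b : ℕ) : Fin m → Fin m → ℝ :=
  chainProd W (fun ℓ => signOf (gseq A W x ℓ)) a b

/-- `Back_ℓ = B D_L W_L ⋯ D_ℓ W_ℓ` (equal to `B` for `ℓ = L+1`) -/
def backMat (B : Fin d → Fin m → ℝ) (A : Fin m → Fin 𝔡 → ℝ)
    (W : Fin L → Fin m → Fin m → ℝ) (x : Fin 𝔡 → ℝ) (ℓ : ℕ) : Fin d → Fin m → ℝ :=
  mmul B (prodDW A W x ℓ L)

/-- formula gradient w.r.t. `W_ℓ` with an arbitrary (fake) loss vector `v`:
`D_ℓ (Back_{ℓ+1}ᵀ v) h_{ℓ-1}ᵀ` -/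
def gradW (B : Fin d → Fin m → ℝ) (A : Fin m → Fin 𝔡 → ℝ)
    (W : Fin L → Fin m → Fin m → ℝ) (x : Fin 𝔡 → ℝ) (v : Fin d → ℝ) (ℓ : ℕ) :
    Fin m → Fin m → ℝ :=
  outer (mulVec (diagMat (signOf (gseq A W x ℓ)))
      (mulVec (transpose (backMat B A W x (ℓ + 1))) v))
    (hseq A W x (ℓ - 1))

/-- loss vector `B h_L − y` -/
def lossVec (B : Fin d → Fin m → ℝ) (A : Fin m → Fin 𝔡 → ℝ)
    (W : Fin L → Fin m → Fin m → ℝ) (x : Fin 𝔡 → ℝ) (y : Fin d → ℝ) : Fin d → ℝ :=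
  fun j => mulVec B (hseq A W x L) j - y j

/-- per-sample ℓ₂ regression loss `F_i` -/
def objFi (B : Fin d → Fin m → ℝ) (A : Fin m → Fin 𝔡 → ℝ)
    (W : Fin L → Fin m → Fin m → ℝ) (x : Fin 𝔡 → ℝ) (y : Fin d → ℝ) : ℝ :=
  (1 / 2) * l2 (lossVec B A W x y) ^ 2

/-- total objective `F` -/
def objF {n : ℕ} (B : Fin d → Fin m → ℝ) (A : Fin m → Fin 𝔡 → ℝ)
    (W : Fin L → Fin m → Fin m → ℝ) (x : Fin n → Fin 𝔡 → ℝ)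
    (y : Fin n → Fin d → ℝ) : ℝ :=
  ∑ i, objFi B A W (x i) (y i)

/-- formula gradient of the total objective w.r.t. `W_ℓ` -/
def gradF {n : ℕ} (B : Fin d → Fin m → ℝ) (A : Fin m → Fin 𝔡 → ℝ)
    (W : Fin L → Fin m → Fin m → ℝ) (x : Fin n → Fin 𝔡 → ℝ)
    (y : Fin n → Fin d → ℝ) (ℓ : ℕ) : Fin m → Fin m → ℝ :=
  ∑ i, gradW B A W (x i) (lossVec B A W (x i) (y i)) ℓ

/-! ### Random initialization -/

/-- a `p × q` random matrix with i.i.d. `N(0, v)` entries -/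
def gaussMat (p q : ℕ) (v : NNReal) : Measure (Fin p → Fin q → ℝ) :=
  Measure.pi fun _ => Measure.pi fun _ => gaussianReal 0 v

/-- joint law of `(A, W)` at random initialization -/
def initAW (𝔡 m L : ℕ) :
    Measure ((Fin m → Fin 𝔡 → ℝ) × (Fin L → Fin m → Fin m → ℝ)) :=
  (gaussMat m 𝔡 (2 / m)).prod (Measure.pi fun _ : Fin L => gaussMat m m (2 / m))

/-- joint law of `(A, W, B)` at random initialization -/
def initMeasure (𝔡 m d L : ℕ) :
    Measure ((Fin m → Fin 𝔡 → ℝ) ×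
      (Fin L → Fin m → Fin m → ℝ) × (Fin d → Fin m → ℝ)) :=
  (gaussMat m 𝔡 (2 / m)).prod
    ((Measure.pi fun _ : Fin L => gaussMat m m (2 / m)).prod (gaussMat d m (1 / d)))


/-- Squared Euclidean norm. -/
def nsq {p : ℕ} (v : Fin p → ℝ) : ℝ := ∑ k, v k ^ 2

lemma nsq_nonneg {p : ℕ} (v : Fin p → ℝ) : 0 ≤ nsq v :=
  Finset.sum_nonneg fun _ _ => sq_nonneg _

lemma nsq_pos {p : ℕ} {v : Fin p → ℝ} (hv : v ≠ 0) : 0 < nsq v := by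
  obtain ⟨k, hk⟩ := Function.ne_iff.mp hv
  refine Finset.sum_pos' (fun _ _ => sq_nonneg _) ⟨k, Finset.mem_univ _, ?_⟩
  exact pow_pos (abs_pos.mpr hk) 2 |>.trans_eq (sq_abs _)

lemma l2_eq {p : ℕ} (v : Fin p → ℝ) : l2 v = Real.sqrt (nsq v) := rfl

/-! ### One-dimensional and product Gaussian integrals -/

/-- A linear form in independent `N(0, v)` variables has law `N(0, v ‖z‖²)`. -/
lemma map_dot_gaussian {q : ℕ} (v : NNReal) (z : Fin q → ℝ) :
    (Measure.pi fun _ : Fin q => gaussianReal 0 v).map (fun w => ∑ j, w j * z j) =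
      gaussianReal 0 (v * (nsq z).toNNReal) := by
  have hm : ∀ j : Fin q, Measurable (fun x : ℝ => z j * x) := fun j => by fun_prop
  have hind : iIndepFun (fun (j : Fin q) (w : Fin q → ℝ) => z j * w j)
      (Measure.pi fun _ : Fin q => gaussianReal 0 v) :=
    iIndepFun_pi (X := fun j x => z j * x) fun j => (hm j).aemeasurable
  have key : ∀ s : Finset (Fin q),
      (Measure.pi fun _ : Fin q => gaussianReal 0 v).map
        (∑ j ∈ s, fun w : Fin q → ℝ => z j * w j) =
      gaussianReal 0 (v * (∑ j ∈ s, z j ^ 2).toNNReal) := by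
    intro s
    induction s using Finset.cons_induction with
    | empty =>
      simp only [Finset.sum_empty, Real.toNNReal_zero, mul_zero, gaussianReal_zero_var]
      exact (Measure.map_const _ (0 : ℝ)).trans (by simp)
    | cons j s hj ih =>
      have h1 : (Measure.pi fun _ : Fin q => gaussianReal 0 v).map
          (fun w : Fin q → ℝ => z j * w j) = gaussianReal 0 ((z j ^ 2).toNNReal * v) := by
        have := (measurePreserving_eval (fun _ : Fin q => gaussianReal 0 v) j).map_eq
        have h2 := gaussianReal_map_const_mul (μ := 0) (v := v) (z j)
        rw [← this, Measure.map_map (hm j) (measurable_pi_apply j), mul_zero] at h2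
        rw [Real.toNNReal_of_nonneg (sq_nonneg (z j))]
        exact h2
      have hI := (hind.indepFun_finsetSum_of_notMem (fun i => by fun_prop) hj).symm
      rw [Finset.sum_cons, gaussianReal_add_gaussianReal_of_indepFun hI h1 ih]
      congr 1
      · simp
      · rw [Finset.sum_cons, Real.toNNReal_add (sq_nonneg _)
          (Finset.sum_nonneg fun _ _ => sq_nonneg _)]
        ring
  have := key Finset.univ
  rw [nsq, ← this]
  congr 1
  ext w
  simp [mul_comm]

/-- Integrals of functions of a Gaussian linear form reduce to the standard Gaussian. -/
lemma lintegral_dot {q : ℕ} (v : NNReal) (z : Fin q → ℝ) {φ : ℝ → ENNReal}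
    (hφ : Measurable φ) :
    ∫⁻ w, φ (∑ j, w j * z j) ∂(Measure.pi fun _ : Fin q => gaussianReal 0 v) =
      ∫⁻ t, φ (Real.sqrt (v * nsq z) * t) ∂(gaussianReal 0 1) := by
  have h0 : 0 ≤ (v : ℝ) * nsq z := mul_nonneg v.2 (nsq_nonneg z)
  have h1 := gaussianReal_map_const_mul (μ := 0) (v := 1) (Real.sqrt (v * nsq z))
  have h2 : (NNReal.mk (Real.sqrt (v * nsq z) ^ 2) (sq_nonneg _)) * 1 =
      v * (nsq z).toNNReal := by
    ext
    change Real.sqrt (v * nsq z) ^ 2 * 1 = (v : ℝ) * ((nsq z).toNNReal : ℝ)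
    rw [Real.sq_sqrt h0, mul_one, Real.coe_toNNReal _ (nsq_nonneg z)]
  rw [h2, mul_zero] at h1
  rw [← lintegral_map hφ (g := fun w : Fin q → ℝ => ∑ j, w j * z j) (by fun_prop),
    map_dot_gaussian, ← h1, lintegral_map hφ (by fun_prop)]

/-- The moment generating function of a squared standard Gaussian. -/
lemma lintegral_exp_sq {s : ℝ} (hs : 2 * s < 1) :
    ∫⁻ t, ENNReal.ofReal (Real.exp (s * t ^ 2)) ∂(gaussianReal 0 1) =
      ENNReal.ofReal (1 / Real.sqrt (1 - 2 * s)) := by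
  have hb : 0 < 1 / 2 - s := by linarith
  rw [gaussianReal_of_var_ne_zero _ one_ne_zero,
    lintegral_withDensity_eq_lintegral_mul _ (measurable_gaussianPDF _ _) (by fun_prop)]
  have : ∀ t : ℝ, (gaussianPDF 0 1 * fun t => ENNReal.ofReal (Real.exp (s * t ^ 2))) t =
      ENNReal.ofReal ((Real.sqrt (2 * Real.pi))⁻¹ * Real.exp (-(1 / 2 - s) * t ^ 2)) := by
    intro t
    rw [Pi.mul_apply, gaussianPDF_def, ← ENNReal.ofReal_mul (gaussianPDFReal_nonneg _ _ _),
      gaussianPDFReal_def, mul_assoc, ← Real.exp_add]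
    simp only [NNReal.coe_one]
    congr 3 <;> ring_nf
  simp_rw [this]
  rw [← ofReal_integral_eq_lintegral_ofReal ((integrable_exp_neg_mul_sq hb).const_mul _)
    (Filter.Eventually.of_forall fun t => by positivity), integral_const_mul, integral_gaussian]
  congr 1
  rw [← Real.sqrt_inv, ← Real.sqrt_mul (by positivity), one_div (Real.sqrt _),
    ← Real.sqrt_inv]
  congr 1
  have := Real.pi_pos
  field_simp

/-- The even moments of a standard Gaussian dominate factorials. -/
lemma factorial_le_moment (p : ℕ) :
    ENNReal.ofReal (p.factorial : ℝ) ≤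
      ∫⁻ t, ENNReal.ofReal ((t ^ 2) ^ p) ∂(gaussianReal 0 1) := by
  have hint : Integrable (fun t : ℝ => (Real.sqrt (2 * Real.pi))⁻¹ *
      (|t| ^ (2 * p : ℝ) * Real.exp (-(1 / 2) * |t| ^ (2 : ℝ)))) := by
    have := (integrable_rpow_mul_exp_neg_mul_sq (b := 1 / 2) (by norm_num)
      (s := (2 * p : ℝ))
      (by have := Nat.cast_nonneg (α := ℝ) p; linarith)).const_mul (Real.sqrt (2 * Real.pi))⁻¹
    refine this.congr (Filter.Eventually.of_forall fun t => ?_)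
    have e1 : |t| ^ (2 * p : ℝ) = t ^ (2 * p : ℝ) := by
      have : (2 * p : ℝ) = ((2 * p : ℕ) : ℝ) := by push_cast; ring
      rw [this, Real.rpow_natCast, Real.rpow_natCast, pow_mul, pow_mul, sq_abs]
    have e2 : |t| ^ (2 : ℝ) = t ^ 2 := by
      rw [show (2 : ℝ) = ((2 : ℕ) : ℝ) by norm_num, Real.rpow_natCast, sq_abs]
    simp only [e1, e2]
  rw [gaussianReal_of_var_ne_zero _ one_ne_zero,
    lintegral_withDensity_eq_lintegral_mul _ (measurable_gaussianPDF _ _) (by fun_prop)]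
  have : ∀ t : ℝ, (gaussianPDF 0 1 * fun t => ENNReal.ofReal ((t ^ 2) ^ p)) t =
      ENNReal.ofReal ((Real.sqrt (2 * Real.pi))⁻¹ *
      (|t| ^ (2 * p : ℝ) * Real.exp (-(1 / 2) * |t| ^ (2 : ℝ)))) := by
    intro t
    have e1 : |t| ^ (2 * p : ℝ) = (t ^ 2) ^ p := by
      have : (2 * p : ℝ) = ((2 * p : ℕ) : ℝ) := by push_cast; ring
      rw [this, Real.rpow_natCast, pow_mul, sq_abs]
    have e2 : |t| ^ (2 : ℝ) = t ^ 2 := by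
      rw [show (2 : ℝ) = ((2 : ℕ) : ℝ) by norm_num, Real.rpow_natCast, sq_abs]
    rw [Pi.mul_apply, gaussianPDF_def, ← ENNReal.ofReal_mul (gaussianPDFReal_nonneg _ _ _),
      gaussianPDFReal_def, e1, e2]
    simp only [NNReal.coe_one]
    congr 1
    rw [mul_assoc, mul_comm ((t ^ 2) ^ p)]
    congr 3 <;> ring_nf
  simp_rw [this]
  rw [← ofReal_integral_eq_lintegral_ofReal hint
    (Filter.Eventually.of_forall fun t => by positivity), integral_const_mul,
    integral_comp_abs (f := fun t : ℝ => t ^ (2 * p : ℝ) * Real.exp (-(1 / 2) * t ^ (2 : ℝ))),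
    integral_rpow_mul_exp_neg_mul_rpow (q := (2 * p : ℝ)) (by norm_num)
      (by have := Nat.cast_nonneg (α := ℝ) p; linarith) (by norm_num),
    show (2 * (p : ℝ) + 1) / 2 = p + 1 / 2 by ring, Real.Gamma_nat_add_half,
    show -(2 * (p : ℝ) + 1) / 2 = -((p : ℝ) + 1 / 2) by ring, Real.rpow_neg (by norm_num),
    Real.rpow_add (by norm_num), Real.rpow_natCast, ← Real.sqrt_eq_rpow]
  apply ENNReal.ofReal_le_ofReal
  have hs2 : Real.sqrt (1 / 2) = (Real.sqrt 2)⁻¹ := by rw [one_div, Real.sqrt_inv]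
  have hfac : ∀ p : ℕ, p.factorial ≤ (2 * p - 1).doubleFactorial := by
    intro p
    induction p with
    | zero => simp
    | succ k ih =>
      rcases k with _ | k
      · simp
      · rw [show 2 * (k + 1 + 1) - 1 = (2 * (k + 1) - 1) + 2 by omega,
          Nat.doubleFactorial_add_two, Nat.factorial_succ]
        exact Nat.mul_le_mul (by omega) ih
  have hp : (p.factorial : ℝ) ≤ ((2 * p - 1).doubleFactorial : ℝ) := by exact_mod_cast hfac p
  refine hp.trans (le_of_eq ?_)
  rw [hs2, Real.sqrt_mul (by norm_num)]
  have : 0 < Real.sqrt Real.pi := Real.sqrt_pos.mpr Real.pi_pos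
  have : 0 < Real.sqrt 2 := Real.sqrt_pos.mpr (by norm_num)
  field_simp
  simp [one_div]

lemma lintegral_pi_prod {ι : Type*} [Fintype ι] {X : Type*} [MeasurableSpace X]
    (μ : Measure X) [IsProbabilityMeasure μ] {f : X → ENNReal} (hf : Measurable f) :
    ∫⁻ w, ∏ k, f (w k) ∂(Measure.pi fun _ : ι => μ) = (∫⁻ x, f x ∂μ) ^ Fintype.card ι := by
  have hind : iIndepFun (fun (k : ι) (w : ι → X) => f (w k)) (Measure.pi fun _ : ι => μ) :=
    iIndepFun_pi (X := fun _ => f) fun _ => hf.aemeasurable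
  rw [lintegral_prod_eq_prod_lintegral_of_indepFun Finset.univ _ hind
    (fun k => hf.comp (measurable_pi_apply k))]
  have : ∀ k : ι, ∫⁻ w, f (w k) ∂(Measure.pi fun _ : ι => μ) = ∫⁻ x, f x ∂μ := fun k =>
    (measurePreserving_eval (fun _ : ι => μ) k).lintegral_comp hf
  simp [this]

/-- Law of one row of a Gaussian matrix. -/
def rowLaw (q : ℕ) (v : NNReal) : Measure (Fin q → ℝ) :=
  Measure.pi fun _ => gaussianReal 0 v

instance (q : ℕ) (v : NNReal) : IsProbabilityMeasure (rowLaw q v) := by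
  unfold rowLaw; infer_instance

lemma gaussMat_eq (p q : ℕ) (v : NNReal) :
    gaussMat p q v = Measure.pi fun _ : Fin p => rowLaw q v := rfl

instance (p q : ℕ) (v : NNReal) : IsProbabilityMeasure (gaussMat p q v) := by
  rw [gaussMat_eq]; infer_instance

lemma lintegral_exp_dot_sq {q : ℕ} {v : NNReal} {y : Fin q → ℝ} {s : ℝ}
    (hs : 2 * (s * (v * nsq y)) < 1) :
    ∫⁻ w, ENNReal.ofReal (Real.exp (s * (∑ j, w j * y j) ^ 2)) ∂(rowLaw q v) =
      ENNReal.ofReal (1 / Real.sqrt (1 - 2 * (s * (v * nsq y)))) := by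
  rw [rowLaw, lintegral_dot v y (φ := fun t => ENNReal.ofReal (Real.exp (s * t ^ 2)))
    (by fun_prop), ← lintegral_exp_sq hs]
  refine lintegral_congr fun t => ?_
  rw [mul_pow, Real.sq_sqrt (mul_nonneg v.coe_nonneg (nsq_nonneg y)), ← mul_assoc s]

lemma lintegral_exp_nsq_mulVec {p q : ℕ} {v : NNReal} {y : Fin q → ℝ} {s : ℝ}
    (hs : 2 * (s * (v * nsq y)) < 1) :
    ∫⁻ B, ENNReal.ofReal (Real.exp (s * nsq (mulVec B y))) ∂(gaussMat p q v) =
      ENNReal.ofReal (1 / Real.sqrt (1 - 2 * (s * (v * nsq y)))) ^ p := by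
  have hm : Measurable fun w : Fin q → ℝ =>
      ENNReal.ofReal (Real.exp (s * (∑ j, w j * y j) ^ 2)) := by fun_prop
  have := lintegral_pi_prod (ι := Fin p) (rowLaw q v) hm
  rw [lintegral_exp_dot_sq hs, Fintype.card_fin] at this
  rw [← this, gaussMat_eq]
  refine lintegral_congr fun B => ?_
  rw [← ENNReal.ofReal_prod_of_nonneg (fun _ _ => (Real.exp_pos _).le), ← Real.exp_sum,
    ← Finset.mul_sum]
  rfl

/-- Symmetrization: under the law of a row, the half space `{w | 0 ≤ w · h}` is independent
of every even event. -/
lemma lintegral_halfspace {q : ℕ} {v : NNReal} (hv : v ≠ 0) {h : Fin q → ℝ} (hh : h ≠ 0)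
    {φ ψ : (Fin q → ℝ) → ENNReal} (hφ : Measurable φ) (hψ : Measurable ψ)
    (eφ : ∀ w, φ (-w) = φ w) (eψ : ∀ w, ψ (-w) = ψ w) :
    2 * ∫⁻ w, (if 0 ≤ ∑ j, w j * h j then φ w else ψ w) ∂(rowLaw q v) =
      ∫⁻ w, φ w ∂(rowLaw q v) + ∫⁻ w, ψ w ∂(rowLaw q v) := by
  have hset : MeasurableSet {w : Fin q → ℝ | 0 ≤ ∑ j, w j * h j} :=
    measurableSet_le measurable_const (by fun_prop)
  have hf : Measurable fun w : Fin q → ℝ => if 0 ≤ ∑ j, w j * h j then φ w else ψ w :=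
    Measurable.ite hset hφ hψ
  have hneg : MeasurePreserving (fun w : Fin q → ℝ => -w) (rowLaw q v) (rowLaw q v) := by
    have h1 : MeasurePreserving (fun x : ℝ => -x) (gaussianReal 0 v) (gaussianReal 0 v) :=
      ⟨measurable_neg, by simpa using gaussianReal_map_neg (μ := 0) (v := v)⟩
    exact measurePreserving_pi (fun _ : Fin q => gaussianReal 0 v)
      (fun _ : Fin q => gaussianReal 0 v) fun _ => h1
  have hae : ∀ᵐ w ∂(rowLaw q v), ∑ j, w j * h j ≠ 0 := by
    have hne : v * (nsq h).toNNReal ≠ 0 :=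
      mul_ne_zero hv (by simpa using nsq_pos hh)
    have := nullSingletonClass_gaussianReal (μ := 0) hne
    have : ∀ᵐ t ∂((rowLaw q v).map fun w => ∑ j, w j * h j), t ≠ 0 := by
      rw [rowLaw, map_dot_gaussian]
      exact Measure.ae_ne _ _
    exact ae_of_ae_map (p := fun t : ℝ => t ≠ 0)
      (Measurable.aemeasurable (by fun_prop)) this
  rw [two_mul]
  nth_rewrite 2 [← hneg.lintegral_comp hf]
  rw [← lintegral_add_left hf, ← lintegral_add_left hφ]
  refine lintegral_congr_ae ?_
  filter_upwards [hae] with w hw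
  have e : ∑ j, (-w) j * h j = -∑ j, w j * h j := by simp
  simp only [e, eφ, eψ]
  rcases lt_or_gt_of_ne hw with h1 | h1
  · rw [if_neg (by linarith), if_pos (by linarith), add_comm]
  · rw [if_pos h1.le, if_neg (by linarith)]

/-! ### One random layer -/

lemma half_add_inv_sqrt_le {r : ℝ} (h0 : 0 ≤ r) (h1 : r ≤ 1 / 8) :
    (1 + 1 / Real.sqrt (1 - 4 * r)) / 2 ≤ Real.exp (r + 8 * r ^ 2) := by
  have hpos : 0 < 1 - 4 * r := by linarith
  have hs : 1 / Real.sqrt (1 - 4 * r) ≤ 1 + 2 * r + 16 * r ^ 2 := by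
    rw [div_le_iff₀ (Real.sqrt_pos.mpr hpos), ← Real.sqrt_sq (by positivity :
      0 ≤ 1 + 2 * r + 16 * r ^ 2), ← Real.sqrt_mul (sq_nonneg _)]
    apply Real.le_sqrt_of_sq_le
    -- the difference of the two sides is `r² (20 - 80 r - 1024 r³) ≥ 0`
    have : 0 ≤ r ^ 2 * (20 - 80 * r - 1024 * r ^ 3) := by
      have h3 : r ^ 3 ≤ (1 / 8) ^ 3 := pow_le_pow_left₀ h0 h1 3
      exact mul_nonneg (sq_nonneg _) (by norm_num at h3; linarith)
    nlinarith
  have := Real.add_one_le_exp (r + 8 * r ^ 2)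
  linarith

lemma mulVec_diag {p q : ℕ} (D : Fin p → ℝ) (w : Fin p → Fin q → ℝ) (z : Fin q → ℝ) :
    mulVec (mmul (diagMat D) w) z = fun k => D k * ∑ j, w k j * z j := by
  ext k
  simp [mulVec, mmul, diagMat, Finset.mul_sum, mul_assoc]

/-- One layer multiplies the `2p`-th moment of the norm of a fixed vector by at most
`exp (8 p² / m)`; the gate depends on the same weights, through a nonzero vector `h`. -/
lemma layer_moment {m p : ℕ} (hm : 0 < m) (hp : 8 * p ≤ m) {h : Fin m → ℝ} (hh : h ≠ 0)
    (z : Fin m → ℝ) :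
    ∫⁻ w, ENNReal.ofReal (nsq (mulVec (mmul (diagMat (signOf (mulVec w h))) w) z) ^ p)
        ∂(gaussMat m m (2 / m)) ≤
      ENNReal.ofReal (Real.exp (8 * p ^ 2 / m) * nsq z ^ p) := by
  have hmR : (0 : ℝ) < m := by exact_mod_cast hm
  rcases eq_or_ne z 0 with rfl | hz
  · have : ∀ w : Fin m → Fin m → ℝ,
        nsq (mulVec (mmul (diagMat (signOf (mulVec w h))) w) (0 : Fin m → ℝ)) =
          nsq (0 : Fin m → ℝ) := by
      intro w; rw [mulVec_diag]; simp [nsq]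
    simp_rw [this]
    rw [lintegral_const, measure_univ, mul_one]
    refine ENNReal.ofReal_le_ofReal (le_mul_of_one_le_left (pow_nonneg (nsq_nonneg _) _) ?_)
    exact Real.one_le_exp (by positivity)
  have hZ := nsq_pos hz
  set Z := nsq z with hZdef
  set s : ℝ := p / Z with hsdef
  set r : ℝ := p / m with hrdef
  have hr0 : 0 ≤ r := by positivity
  have hr1 : r ≤ 1 / 8 := by
    rw [hrdef, div_le_iff₀ hmR]
    have : (8 * p : ℝ) ≤ m := by exact_mod_cast hp
    linarith
  let f : (Fin m → ℝ) → ENNReal := fun w =>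
    if 0 ≤ ∑ j, w j * h j then ENNReal.ofReal (Real.exp (s * (∑ j, w j * z j) ^ 2)) else 1
  have hf : Measurable f := by
    refine Measurable.ite (measurableSet_le measurable_const (by fun_prop)) ?_ measurable_const
    fun_prop
  have hvar : ((2 / m : NNReal) : ℝ) = 2 / m := by push_cast; rfl
  have hsv : s * (((2 / m : NNReal) : ℝ) * nsq z) = 2 * r := by
    rw [hvar, hsdef, hrdef, ← hZdef]; field_simp
  have hfi : ∫⁻ w, f w ∂(rowLaw m (2 / m)) ≤ ENNReal.ofReal (Real.exp (r + 8 * r ^ 2)) := by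
    have h2 := lintegral_halfspace (v := 2 / (m : NNReal)) (by positivity) hh
      (φ := fun w => ENNReal.ofReal (Real.exp (s * (∑ j, w j * z j) ^ 2))) (ψ := fun _ => 1)
      (by fun_prop) measurable_const (fun w => by simp) (fun w => rfl)
    rw [lintegral_exp_dot_sq (by rw [hsv]; linarith), lintegral_const, measure_univ, mul_one,
      hsv, ← ENNReal.ofReal_one, ← ENNReal.ofReal_add (by positivity) zero_le_one] at h2
    have h3 : ∫⁻ w, f w ∂(rowLaw m (2 / m)) =
        ENNReal.ofReal ((1 / Real.sqrt (1 - 2 * (2 * r)) + 1) / 2) := by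
      rw [ENNReal.ofReal_div_of_pos two_pos, ← h2, ENNReal.ofReal_ofNat, mul_comm,
        ENNReal.mul_div_cancel_right two_ne_zero ENNReal.ofNat_ne_top]
      simp [f]
    rw [h3]
    refine ENNReal.ofReal_le_ofReal (le_trans (le_of_eq ?_) (half_add_inv_sqrt_le hr0 hr1))
    rw [show 2 * (2 * r) = 4 * r by ring]; ring
  -- `S ^ p ≤ exp (p (S - 1))` turns the moment into a product over rows
  have hpt : ∀ w : Fin m → Fin m → ℝ,
      ENNReal.ofReal (nsq (mulVec (mmul (diagMat (signOf (mulVec w h))) w) z) ^ p) ≤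
        ENNReal.ofReal (Z ^ p * Real.exp (-p)) * ∏ k, f (w k) := by
    intro w
    set S := nsq (mulVec (mmul (diagMat (signOf (mulVec w h))) w) z) with hS
    have hSn : 0 ≤ S := nsq_nonneg _
    have hprod : ∏ k, f (w k) = ENNReal.ofReal (Real.exp (s * S)) := by
      have : ∀ k, f (w k) = ENNReal.ofReal (Real.exp
          (s * (mulVec (mmul (diagMat (signOf (mulVec w h))) w) z) k ^ 2)) := by
        intro k
        rw [mulVec_diag]
        by_cases hk : 0 ≤ ∑ j, w k j * h j
        · simp [f, signOf, mulVec, hk]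
        · simp [f, signOf, mulVec, hk]
      simp_rw [this]
      rw [← ENNReal.ofReal_prod_of_nonneg (fun _ _ => (Real.exp_pos _).le), ← Real.exp_sum,
        ← Finset.mul_sum]
      rfl
    rw [hprod, ← ENNReal.ofReal_mul (by positivity)]
    refine ENNReal.ofReal_le_ofReal ?_
    have h1 : S / Z ≤ Real.exp (S / Z - 1) := by
      have := Real.add_one_le_exp (S / Z - 1); linarith
    have h2 := pow_le_pow_left₀ (by positivity) h1 p
    rw [div_pow, div_le_iff₀ (by positivity), ← Real.exp_nat_mul] at h2
    refine h2.trans (le_of_eq ?_)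
    rw [mul_assoc, ← Real.exp_add, mul_comm]
    congr 2
    rw [hsdef]; ring
  calc _ ≤ ∫⁻ w, ENNReal.ofReal (Z ^ p * Real.exp (-p)) * ∏ k, f (w k)
        ∂(gaussMat m m (2 / m)) := lintegral_mono hpt
    _ = ENNReal.ofReal (Z ^ p * Real.exp (-p)) * (∫⁻ w, f w ∂(rowLaw m (2 / m))) ^ m := by
      have hfm : Measurable fun w : Fin m → Fin m → ℝ => ∏ k, f (w k) :=
        Finset.measurable_fun_prod _ fun k _ => hf.comp (measurable_pi_apply k)
      rw [lintegral_const_mul _ hfm, gaussMat_eq, lintegral_pi_prod _ hf, Fintype.card_fin]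
    _ ≤ ENNReal.ofReal (Z ^ p * Real.exp (-p)) *
        ENNReal.ofReal (Real.exp (r + 8 * r ^ 2)) ^ m := by gcongr
    _ = _ := by
      rw [← ENNReal.ofReal_pow (by positivity), ← ENNReal.ofReal_mul (by positivity),
        ← Real.exp_nat_mul, mul_assoc, ← Real.exp_add, mul_comm]
      congr 3
      rw [hrdef]; field_simp; ring

/-- A layer fed with a nonzero vector outputs zero with probability `2 ^ (-m)`. -/
lemma layer_dead {m q : ℕ} {v : NNReal} (hv : v ≠ 0) {h : Fin q → ℝ} (hh : h ≠ 0) :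
    ∫⁻ w, (if relu (mulVec w h) = 0 then 1 else 0) ∂(gaussMat m q v) ≤
      (ENNReal.ofReal (1 / 2)) ^ m := by
  let f : (Fin q → ℝ) → ENNReal := fun w => if 0 ≤ ∑ j, w j * (-h) j then 1 else 0
  have hf : Measurable f :=
    Measurable.ite (measurableSet_le measurable_const (by fun_prop)) measurable_const
      measurable_const
  have hfi : ∫⁻ w, f w ∂(rowLaw q v) = ENNReal.ofReal (1 / 2) := by
    have h2 := lintegral_halfspace hv (neg_ne_zero.mpr hh)
      (φ := fun _ => 1) (ψ := fun _ => 0) measurable_const measurable_const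
      (fun w => rfl) (fun w => rfl)
    rw [lintegral_const, measure_univ, lintegral_zero, mul_one, add_zero] at h2
    rw [ENNReal.ofReal_div_of_pos two_pos, ENNReal.ofReal_one, ← h2, ENNReal.ofReal_ofNat, mul_comm,
        ENNReal.mul_div_cancel_right two_ne_zero ENNReal.ofNat_ne_top]
  have := lintegral_pi_prod (ι := Fin m) (rowLaw q v) hf
  rw [hfi, Fintype.card_fin] at this
  rw [← this, gaussMat_eq]
  refine lintegral_mono fun w => ?_
  by_cases hw : relu (mulVec w h) = 0
  · have : ∀ k, f (w k) = 1 := by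
      intro k
      have hk := congrFun hw k
      simp only [relu, mulVec, Pi.zero_apply, max_eq_right_iff] at hk
      simp [f, hk]
    rw [if_pos hw]
    simp [this]
  · simp [hw]

/-! ### Input and output moments -/

/-- Gaussian output matrix applied to a fixed vector: the factorial and the factor `√2 ^ d`
come from `t ^ p ≤ p! s ^ (-p) exp (s t)` with `s = d / (4 ‖y‖²)`. -/
lemma output_moment {d m p : ℕ} (hd : 0 < d) (hp : 0 < p) (y : Fin m → ℝ) :
    ∫⁻ B, ENNReal.ofReal (nsq (mulVec B y) ^ p) ∂(gaussMat d m (1 / d)) ≤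
      ENNReal.ofReal (p.factorial * (4 / d) ^ p * Real.sqrt 2 ^ d) *
        ENNReal.ofReal (nsq y ^ p) := by
  have hdR : (0 : ℝ) < d := by exact_mod_cast hd
  rcases eq_or_ne y 0 with rfl | hy
  · have : ∀ B : Fin d → Fin m → ℝ, nsq (mulVec B (0 : Fin m → ℝ)) = 0 := by
      intro B; simp [nsq, mulVec]
    simp_rw [this]
    simp [zero_pow hp.ne']
  have hY := nsq_pos hy
  set s : ℝ := d / (4 * nsq y) with hs
  have hs0 : 0 < s := by positivity
  have hsv : s * (((1 / d : NNReal) : ℝ) * nsq y) = 1 / 4 := by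
    push_cast
    rw [hs]; field_simp
  have hpt : ∀ B : Fin d → Fin m → ℝ, ENNReal.ofReal (nsq (mulVec B y) ^ p) ≤
      ENNReal.ofReal (p.factorial * (1 / s) ^ p) *
        ENNReal.ofReal (Real.exp (s * nsq (mulVec B y))) := by
    intro B
    rw [← ENNReal.ofReal_mul (by positivity)]
    refine ENNReal.ofReal_le_ofReal ?_
    have h1 := Real.pow_div_factorial_le_exp (x := s * nsq (mulVec B y))
      (mul_nonneg hs0.le (nsq_nonneg _)) p
    rw [div_le_iff₀ (by positivity), mul_pow] at h1
    have h2 : 0 < s ^ p := by positivity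
    rw [one_div, inv_pow]
    field_simp
    linarith
  calc _ ≤ ∫⁻ B, ENNReal.ofReal (p.factorial * (1 / s) ^ p) *
        ENNReal.ofReal (Real.exp (s * nsq (mulVec B y))) ∂(gaussMat d m (1 / d)) :=
        lintegral_mono hpt
    _ = ENNReal.ofReal (p.factorial * (1 / s) ^ p) * ENNReal.ofReal (Real.sqrt 2) ^ d := by
      rw [lintegral_const_mul' _ _ ENNReal.ofReal_ne_top,
        lintegral_exp_nsq_mulVec (by rw [hsv]; norm_num), hsv]
      congr 3
      rw [one_div, ← Real.sqrt_inv]; norm_num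
    _ = _ := by
      rw [← ENNReal.ofReal_pow (by positivity), ← ENNReal.ofReal_mul (by positivity),
        ← ENNReal.ofReal_mul (by positivity)]
      congr 1
      have : 1 / s = 4 / d * nsq y := by rw [hs]; field_simp
      rw [this, mul_pow]; ring

lemma input_moment {m p : ℕ} (hm : 0 < m) (hp : 8 * p ≤ m) :
    ∫⁻ u, ENNReal.ofReal (nsq u ^ p) ∂(rowLaw m 1) ≤
      ENNReal.ofReal ((m * Real.exp 1) ^ p) := by
  have hmR : (0 : ℝ) < m := by exact_mod_cast hm
  set r : ℝ := p / m with hr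
  have hr0 : 0 ≤ r := by positivity
  have hr1 : r ≤ 1 / 8 := by
    rw [hr, div_le_iff₀ hmR]
    have : (8 * p : ℝ) ≤ m := by exact_mod_cast hp
    linarith
  let f : ℝ → ENNReal := fun t => ENNReal.ofReal (Real.exp (r * t ^ 2))
  have hf : Measurable f := by fun_prop
  have hfi : ∫⁻ t, f t ∂(gaussianReal 0 1) ≤ ENNReal.ofReal (Real.exp (2 * r)) := by
    rw [lintegral_exp_sq (by linarith)]
    refine ENNReal.ofReal_le_ofReal ?_
    have h1 : Real.exp (-(4 * r)) ≤ 1 - 2 * r := by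
      rw [Real.exp_neg, inv_le_comm₀ (Real.exp_pos _) (by linarith)]
      refine le_trans ?_ (Real.add_one_le_exp _)
      rw [inv_le_iff_one_le_mul₀ (by linarith)]
      nlinarith
    have h2 : Real.exp (-(2 * r)) ≤ Real.sqrt (1 - 2 * r) := by
      apply Real.le_sqrt_of_sq_le
      rw [← Real.exp_nat_mul]
      refine le_trans (le_of_eq ?_) h1
      congr 1; push_cast; ring
    calc 1 / Real.sqrt (1 - 2 * r) ≤ 1 / Real.exp (-(2 * r)) :=
          one_div_le_one_div_of_le (Real.exp_pos _) h2
      _ = _ := by rw [Real.exp_neg, one_div, inv_inv]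
  have hpt : ∀ u : Fin m → ℝ, ENNReal.ofReal (nsq u ^ p) ≤
      ENNReal.ofReal ((m : ℝ) ^ p * Real.exp (-p)) * ∏ k, f (u k) := by
    intro u
    have hprod : ∏ k, f (u k) = ENNReal.ofReal (Real.exp (r * nsq u)) := by
      rw [← ENNReal.ofReal_prod_of_nonneg (fun _ _ => (Real.exp_pos _).le), ← Real.exp_sum,
        ← Finset.mul_sum]
      rfl
    rw [hprod, ← ENNReal.ofReal_mul (by positivity)]
    refine ENNReal.ofReal_le_ofReal ?_
    have h1 : nsq u / m ≤ Real.exp (nsq u / m - 1) := by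
      have := Real.add_one_le_exp (nsq u / m - 1); linarith
    have h2 := pow_le_pow_left₀ (div_nonneg (nsq_nonneg u) hmR.le) h1 p
    rw [div_pow, div_le_iff₀ (by positivity), ← Real.exp_nat_mul] at h2
    refine h2.trans (le_of_eq ?_)
    rw [mul_assoc, ← Real.exp_add, mul_comm]
    congr 2
    rw [hr]; ring
  have hfm : Measurable fun u : Fin m → ℝ => ∏ k, f (u k) :=
    Finset.measurable_fun_prod _ fun k _ => hf.comp (measurable_pi_apply k)
  calc _ ≤ ∫⁻ u, ENNReal.ofReal ((m : ℝ) ^ p * Real.exp (-p)) * ∏ k, f (u k)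
        ∂(rowLaw m 1) := lintegral_mono hpt
    _ = ENNReal.ofReal ((m : ℝ) ^ p * Real.exp (-p)) * (∫⁻ t, f t ∂(gaussianReal 0 1)) ^ m := by
      rw [lintegral_const_mul _ hfm, rowLaw, lintegral_pi_prod _ hf, Fintype.card_fin]
    _ ≤ ENNReal.ofReal ((m : ℝ) ^ p * Real.exp (-p)) * ENNReal.ofReal (Real.exp (2 * r)) ^ m := by
      gcongr
    _ = _ := by
      rw [← ENNReal.ofReal_pow (by positivity), ← ENNReal.ofReal_mul (by positivity),
        ← Real.exp_nat_mul, mul_assoc, ← Real.exp_add, mul_pow, ← Real.exp_nat_mul]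
      congr 3
      rw [hr]; field_simp; ring

/-- Averaging `‖N u‖^(2p)` over a Gaussian `u` controls the norm of `Nᵀ v` for all `v` at once,
which replaces a net argument: `‖N u‖ ‖v‖ ≥ ⟨Nᵀ v, u⟩` and the latter is a Gaussian. -/
lemma transpose_le_average {d m p : ℕ} (N : Fin d → Fin m → ℝ) (v : Fin d → ℝ) :
    ENNReal.ofReal (p.factorial * nsq (mulVec (transpose N) v) ^ p) ≤
      (∫⁻ u, ENNReal.ofReal (nsq (mulVec N u) ^ p) ∂(rowLaw m 1)) *
        ENNReal.ofReal (nsq v ^ p) := by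
  set y := mulVec (transpose N) v with hy
  have hcs : ∀ u : Fin m → ℝ, (∑ j, u j * y j) ^ 2 ≤ nsq (mulVec N u) * nsq v := by
    intro u
    have : ∑ j, u j * y j = ∑ i, mulVec N u i * v i := by
      simp only [hy, mulVec, transpose, Finset.mul_sum, Finset.sum_mul]
      rw [Finset.sum_comm]
      refine Finset.sum_congr rfl fun i _ => Finset.sum_congr rfl fun j _ => by ring
    rw [this]
    exact Finset.sum_mul_sq_le_sq_mul_sq _ _ _
  calc _ = ENNReal.ofReal (nsq y ^ p) * ENNReal.ofReal (p.factorial : ℝ) := by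
        rw [← ENNReal.ofReal_mul (pow_nonneg (nsq_nonneg _) _), mul_comm]
    _ ≤ ENNReal.ofReal (nsq y ^ p) * ∫⁻ t, ENNReal.ofReal ((t ^ 2) ^ p) ∂(gaussianReal 0 1) := by
        gcongr
        exact factorial_le_moment p
    _ = ∫⁻ u, ENNReal.ofReal (((∑ j, u j * y j) ^ 2) ^ p) ∂(rowLaw m 1) := by
        rw [rowLaw, lintegral_dot 1 y (φ := fun t => ENNReal.ofReal ((t ^ 2) ^ p)) (by fun_prop),
          ← lintegral_const_mul' _ _ ENNReal.ofReal_ne_top]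
        refine lintegral_congr fun t => ?_
        rw [← ENNReal.ofReal_mul (pow_nonneg (nsq_nonneg _) _), mul_pow (Real.sqrt _),
          NNReal.coe_one, one_mul, Real.sq_sqrt (nsq_nonneg y), mul_pow]
    _ ≤ ∫⁻ u, ENNReal.ofReal (nsq (mulVec N u) ^ p) * ENNReal.ofReal (nsq v ^ p)
          ∂(rowLaw m 1) := by
        refine lintegral_mono fun u => ?_
        rw [← ENNReal.ofReal_mul (pow_nonneg (nsq_nonneg _) _), ← mul_pow]
        exact ENNReal.ofReal_le_ofReal (pow_le_pow_left₀ (sq_nonneg _) (hcs u) p)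
    _ = _ := lintegral_mul_const' _ _ ENNReal.ofReal_ne_top

/-! ### Measurability and locality of the network maps -/

section Meas
variable {α : Type*} [MeasurableSpace α]

lemma measurable_mulVec {p q : ℕ} {M : α → Fin p → Fin q → ℝ} {v : α → Fin q → ℝ}
    (hM : Measurable M) (hv : Measurable v) : Measurable fun a => mulVec (M a) (v a) := by
  unfold mulVec; fun_prop

lemma measurable_mmul {p q r : ℕ} {M : α → Fin p → Fin q → ℝ} {N : α → Fin q → Fin r → ℝ}
    (hM : Measurable M) (hN : Measurable N) : Measurable fun a => mmul (M a) (N a) := by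
  unfold mmul; fun_prop

lemma measurable_nsq {p : ℕ} {v : α → Fin p → ℝ} (hv : Measurable v) :
    Measurable fun a => nsq (v a) := by
  unfold nsq; fun_prop

lemma measurable_relu {p : ℕ} {v : α → Fin p → ℝ} (hv : Measurable v) :
    Measurable fun a => relu (v a) := by
  unfold relu; fun_prop

lemma measurable_diag_sign {p : ℕ} {v : α → Fin p → ℝ} (hv : Measurable v) :
    Measurable fun a => diagMat (signOf (v a)) := by
  refine measurable_pi_lambda _ fun i => measurable_pi_lambda _ fun j => ?_
  by_cases h : i = j
  · simp only [diagMat, h, if_true, signOf]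
    exact Measurable.ite (measurableSet_le measurable_const (by fun_prop)) measurable_const
      measurable_const
  · simp only [diagMat, h, if_false]
    exact measurable_const

lemma measurable_Wat {W : α → Fin L → Fin m → Fin m → ℝ} (hW : Measurable W) (ℓ : ℕ) :
    Measurable fun a => Wat (W a) ℓ := by
  by_cases h : 1 ≤ ℓ ∧ ℓ ≤ L
  · simp only [Wat, h, and_self, dite_true]
    exact (measurable_pi_apply _).comp hW
  · simp only [Wat, h, dite_false]
    exact measurable_const

lemma measurable_hseq {A : α → Fin m → Fin 𝔡 → ℝ} {W : α → Fin L → Fin m → Fin m → ℝ}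
    (hA : Measurable A) (hW : Measurable W) (x : Fin 𝔡 → ℝ) (ℓ : ℕ) :
    Measurable fun a => hseq (A a) (W a) x ℓ := by
  induction ℓ with
  | zero => exact measurable_relu (measurable_mulVec hA measurable_const)
  | succ ℓ ih =>
    by_cases h : ℓ + 1 ≤ L
    · simp only [hseq, h, if_true]
      exact measurable_relu (measurable_mulVec (measurable_Wat hW _) ih)
    · simpa only [hseq, h, if_false] using ih

lemma measurable_gseq {A : α → Fin m → Fin 𝔡 → ℝ} {W : α → Fin L → Fin m → Fin m → ℝ}
    (hA : Measurable A) (hW : Measurable W) (x : Fin 𝔡 → ℝ) (ℓ : ℕ) :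
    Measurable fun a => gseq (A a) (W a) x ℓ := by
  cases ℓ with
  | zero => exact measurable_mulVec hA measurable_const
  | succ ℓ => exact measurable_mulVec (measurable_Wat hW _) (measurable_hseq hA hW x ℓ)

lemma measurable_prodDW {A : α → Fin m → Fin 𝔡 → ℝ} {W : α → Fin L → Fin m → Fin m → ℝ}
    (hA : Measurable A) (hW : Measurable W) (x : Fin 𝔡 → ℝ) (a b : ℕ) :
    Measurable fun t => prodDW (A t) (W t) x a b := by
  unfold prodDW
  induction b with
  | zero => exact measurable_const
  | succ b ih =>
    by_cases h : a ≤ b + 1 ∧ b + 1 ≤ L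
    · simp only [chainProd, h, and_self, if_true]
      exact measurable_mmul (measurable_mmul (measurable_diag_sign (measurable_gseq hA hW x _))
        (measurable_Wat hW _)) ih
    · simpa only [chainProd, h, if_false] using ih

lemma measurable_dead {A : α → Fin m → Fin 𝔡 → ℝ} {W : α → Fin L → Fin m → Fin m → ℝ}
    (hA : Measurable A) (hW : Measurable W) (x : Fin 𝔡 → ℝ) (ℓ : ℕ) :
    MeasurableSet {t | hseq (A t) (W t) x ℓ = 0} :=
  measurable_hseq hA hW x ℓ (measurableSet_singleton 0)

end Meas

lemma Wat_update_of_le (W : Fin L → Fin m → Fin m → ℝ) (j : Fin L) (w : Fin m → Fin m → ℝ)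
    {ℓ : ℕ} (h : ℓ ≤ j) : Wat (Function.update W j w) ℓ = Wat W ℓ := by
  by_cases h1 : 1 ≤ ℓ ∧ ℓ ≤ L
  · simp only [Wat, h1, and_self, dite_true]
    rw [Function.update_of_ne]
    intro h2
    have := congrArg Fin.val h2
    simp only at this
    omega
  · simp only [Wat, h1, dite_false]

lemma Wat_update_self (W : Fin L → Fin m → Fin m → ℝ) (j : Fin L) (w : Fin m → Fin m → ℝ) :
    Wat (Function.update W j w) (j + 1) = w := by
  have h1 : 1 ≤ (j : ℕ) + 1 ∧ (j : ℕ) + 1 ≤ L := ⟨by omega, j.2⟩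
  simp only [Wat, h1, and_self, dite_true]
  have : (⟨(j : ℕ) + 1 - 1, by omega⟩ : Fin L) = j := Fin.ext (by simp)
  rw [this, Function.update_self]

lemma hseq_update (A : Fin m → Fin 𝔡 → ℝ) (W : Fin L → Fin m → Fin m → ℝ) (x : Fin 𝔡 → ℝ)
    (j : Fin L) (w : Fin m → Fin m → ℝ) {ℓ : ℕ} (h : ℓ ≤ j) :
    hseq A (Function.update W j w) x ℓ = hseq A W x ℓ := by
  induction ℓ with
  | zero => rfl
  | succ ℓ ih => simp only [hseq, Wat_update_of_le W j w h, ih (by omega)]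

lemma gseq_update (A : Fin m → Fin 𝔡 → ℝ) (W : Fin L → Fin m → Fin m → ℝ) (x : Fin 𝔡 → ℝ)
    (j : Fin L) (w : Fin m → Fin m → ℝ) {ℓ : ℕ} (h : ℓ ≤ j) :
    gseq A (Function.update W j w) x ℓ = gseq A W x ℓ := by
  cases ℓ with
  | zero => rfl
  | succ ℓ => simp only [gseq, Wat_update_of_le W j w h, hseq_update A W x j w (by omega : ℓ ≤ j)]

lemma prodDW_update (A : Fin m → Fin 𝔡 → ℝ) (W : Fin L → Fin m → Fin m → ℝ) (x : Fin 𝔡 → ℝ)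
    (a : ℕ) (j : Fin L) (w : Fin m → Fin m → ℝ) {b : ℕ} (h : b ≤ j) :
    prodDW A (Function.update W j w) x a b = prodDW A W x a b := by
  unfold prodDW
  induction b with
  | zero => rfl
  | succ b ih =>
    simp only [chainProd, Wat_update_of_le W j w h, ih (by omega), gseq_update A W x j w h]

lemma mulVec_mmul {p q r : ℕ} (M : Fin p → Fin q → ℝ) (N : Fin q → Fin r → ℝ) (v : Fin r → ℝ) :
    mulVec (mmul M N) v = mulVec M (mulVec N v) := by
  ext i
  simp only [mulVec, mmul, Finset.sum_mul, Finset.mul_sum]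
  rw [Finset.sum_comm]
  refine Finset.sum_congr rfl fun j _ => Finset.sum_congr rfl fun k _ => by ring

lemma mulVec_idMat {p : ℕ} (v : Fin p → ℝ) : mulVec (idMat p) v = v := by
  ext i; simp [mulVec, idMat]

lemma hseq_zero_mono (A : Fin m → Fin 𝔡 → ℝ) (W : Fin L → Fin m → Fin m → ℝ) (x : Fin 𝔡 → ℝ)
    (b : ℕ) (h : hseq A W x (b - 1) = 0) : hseq A W x b = 0 := by
  cases b with
  | zero => exact h
  | succ b =>
    simp only [Nat.add_sub_cancel] at h
    simp only [hseq, h]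
    split_ifs
    · ext k; simp [relu, mulVec]
    · rfl


/-! ### Moments along the chain of layers -/

lemma lintegral_pi_step {j : Fin L} (μ : Measure (Fin m → Fin m → ℝ)) [IsProbabilityMeasure μ]
    {f g : (Fin L → Fin m → Fin m → ℝ) → ENNReal} (hf : Measurable f) (hg : Measurable g)
    (h : ∀ W, ∫⁻ w, f (Function.update W j w) ∂μ ≤ ∫⁻ w, g (Function.update W j w) ∂μ) :
    ∫⁻ W, f W ∂(Measure.pi fun _ : Fin L => μ) ≤ ∫⁻ W, g W ∂(Measure.pi fun _ : Fin L => μ) := by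
  refine lintegral_le_of_lmarginal_le {j} hf hg fun W => ?_
  rw [lmarginal_singleton, lmarginal_singleton]
  exact h W

/-- The truncated `2p`-th power of `‖D_b W_b ⋯ D_a W_a u‖`: it is replaced by `0` when the input
`h_{b-1}` of layer `b` vanishes, in which case the sign matrix `D_b` is the identity. -/
def liveMoment (A : Fin m → Fin 𝔡 → ℝ) (W : Fin L → Fin m → Fin m → ℝ) (x : Fin 𝔡 → ℝ)
    (a p b : ℕ) (u : Fin m → ℝ) : ENNReal :=
  if hseq A W x (b - 1) = 0 then 0 else ENNReal.ofReal (nsq (mulVec (prodDW A W x a b) u) ^ p)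

lemma measurable_liveMoment {α : Type*} [MeasurableSpace α] {A : α → Fin m → Fin 𝔡 → ℝ}
    {W : α → Fin L → Fin m → Fin m → ℝ} {u : α → Fin m → ℝ} (hA : Measurable A)
    (hW : Measurable W) (hu : Measurable u) (x : Fin 𝔡 → ℝ) (a p b : ℕ) :
    Measurable fun t => liveMoment (A t) (W t) x a p b (u t) := by
  unfold liveMoment
  refine Measurable.ite (measurable_dead hA hW x _) measurable_const ?_
  exact ((measurable_nsq (measurable_mulVec (measurable_prodDW hA hW x a b) hu)).pow_const
    p).ennreal_ofReal

/-- Integrating out one layer at a time multiplies the `p`-th moment by at most `exp (8 p² / m)`. -/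
lemma chain_moment {p : ℕ} (hm : 0 < m) (hp : 8 * p ≤ m) (A : Fin m → Fin 𝔡 → ℝ)
    (x : Fin 𝔡 → ℝ) (a : ℕ) (u : Fin m → ℝ) {b : ℕ} (hb : b ≤ L) :
    ∫⁻ W, liveMoment A W x a p b u ∂(Measure.pi fun _ : Fin L => gaussMat m m (2 / m)) ≤
      ENNReal.ofReal (Real.exp (8 * p ^ 2 / m) ^ b * nsq u ^ p) := by
  have meas : ∀ b, Measurable fun W : Fin L → Fin m → Fin m → ℝ => liveMoment A W x a p b u :=
    fun b => measurable_liveMoment measurable_const measurable_id measurable_const x a p b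
  induction b with
  | zero =>
    calc _ ≤ ∫⁻ _, ENNReal.ofReal (nsq u ^ p)
          ∂(Measure.pi fun _ : Fin L => gaussMat m m (2 / m)) := by
          refine lintegral_mono fun W => ?_
          simp only [liveMoment, prodDW, chainProd, mulVec_idMat]
          split_ifs
          · exact zero_le
          · exact le_rfl
      _ = _ := by simp
  | succ b ih =>
    have he : (1 : ℝ) ≤ Real.exp (8 * p ^ 2 / m) := Real.one_le_exp (by positivity)
    calc _ ≤ ∫⁻ W, ENNReal.ofReal (Real.exp (8 * p ^ 2 / m)) * liveMoment A W x a p b u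
          ∂(Measure.pi fun _ : Fin L => gaussMat m m (2 / m)) := ?_
      _ = ENNReal.ofReal (Real.exp (8 * p ^ 2 / m)) * ∫⁻ W, liveMoment A W x a p b u
          ∂(Measure.pi fun _ : Fin L => gaussMat m m (2 / m)) :=
          lintegral_const_mul _ (meas b)
      _ ≤ ENNReal.ofReal (Real.exp (8 * p ^ 2 / m)) *
          ENNReal.ofReal (Real.exp (8 * p ^ 2 / m) ^ b * nsq u ^ p) := by
          gcongr
          exact ih (by omega)
      _ = _ := by
          rw [← ENNReal.ofReal_mul (Real.exp_pos _).le]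
          congr 1; ring
    by_cases hab : a ≤ b + 1
    · refine lintegral_pi_step (j := ⟨b, hb⟩) _ (meas _) ((meas b).const_mul _) fun W => ?_
      by_cases h0 : hseq A W x b = 0
      · have hz : ∀ w, liveMoment A (Function.update W ⟨b, hb⟩ w) x a p (b + 1) u = 0 := by
          intro w
          simp only [liveMoment, Nat.add_sub_cancel, hseq_update A W x ⟨b, hb⟩ w (le_refl b),
            h0, if_true]
        simp only [hz, lintegral_zero, zero_le]
      · have h0' : hseq A W x (b - 1) ≠ 0 := fun h => h0 (hseq_zero_mono A W x b h)
        have hl : ∀ w, liveMoment A (Function.update W ⟨b, hb⟩ w) x a p (b + 1) u =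
            ENNReal.ofReal (nsq (mulVec (mmul (diagMat (signOf (mulVec w (hseq A W x b)))) w)
              (mulVec (prodDW A W x a b) u)) ^ p) := by
          intro w
          have hw := Wat_update_self W ⟨b, hb⟩ w
          simp only at hw
          have h1 : prodDW A (Function.update W ⟨b, hb⟩ w) x a (b + 1) =
              mmul (mmul (diagMat (signOf (mulVec w (hseq A W x b)))) w) (prodDW A W x a b) := by
            rw [← prodDW_update A W x a ⟨b, hb⟩ w (le_refl b)]
            simp only [prodDW, chainProd, hab, hb, and_self, if_true, gseq, hw,
              hseq_update A W x ⟨b, hb⟩ w (le_refl b)]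
          simp only [liveMoment, Nat.add_sub_cancel, hseq_update A W x ⟨b, hb⟩ w (le_refl b),
            h0, if_false, h1, mulVec_mmul]
        have hr : ∀ w, liveMoment A (Function.update W ⟨b, hb⟩ w) x a p b u =
            ENNReal.ofReal (nsq (mulVec (prodDW A W x a b) u) ^ p) := by
          intro w
          simp only [liveMoment, prodDW_update A W x a ⟨b, hb⟩ w (le_refl b),
            hseq_update A W x ⟨b, hb⟩ w (Nat.sub_le b 1), h0', if_false]
        simp only [hl, hr, lintegral_const, measure_univ, mul_one]
        refine (layer_moment hm hp h0 _).trans ?_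
        rw [ENNReal.ofReal_mul (Real.exp_pos _).le]
    · refine lintegral_mono fun W => ?_
      have h1 : prodDW A W x a (b + 1) = prodDW A W x a b := by
        simp only [prodDW, chainProd, hab, false_and, if_false]
      simp only [liveMoment, h1, Nat.add_sub_cancel]
      by_cases h0 : hseq A W x b = 0
      · simp [h0]
      · have h0' : hseq A W x (b - 1) ≠ 0 := fun h => h0 (hseq_zero_mono A W x b h)
        simp only [h0, h0', if_false]
        refine le_mul_of_one_le_left zero_le ?_
        rwa [ENNReal.one_le_ofReal]

/-! ### The network dies with exponentially small probability -/

lemma chain_dead (hm : 0 < m) (A : Fin m → Fin 𝔡 → ℝ) (x : Fin 𝔡 → ℝ) {b : ℕ} (hb : b ≤ L) :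
    ∫⁻ W, (if hseq A W x b = 0 then 1 else 0)
        ∂(Measure.pi fun _ : Fin L => gaussMat m m (2 / m)) ≤
      (if relu (mulVec A x) = 0 then 1 else 0) + b * ENNReal.ofReal (1 / 2) ^ m := by
  have meas : ∀ b, Measurable fun W : Fin L → Fin m → Fin m → ℝ =>
      (if hseq A W x b = 0 then (1 : ENNReal) else 0) := fun b =>
    Measurable.ite (measurable_dead measurable_const measurable_id x b) measurable_const
      measurable_const
  induction b with
  | zero =>
    simp only [hseq, Nat.cast_zero, zero_mul, add_zero]
    by_cases h : relu (mulVec A x) = 0 <;> simp [h]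
  | succ b ih =>
    calc _ ≤ ∫⁻ W, ((if hseq A W x b = 0 then (1 : ENNReal) else 0) + ENNReal.ofReal (1 / 2) ^ m)
          ∂(Measure.pi fun _ : Fin L => gaussMat m m (2 / m)) := ?_
      _ = ∫⁻ W, (if hseq A W x b = 0 then (1 : ENNReal) else 0)
          ∂(Measure.pi fun _ : Fin L => gaussMat m m (2 / m)) + ENNReal.ofReal (1 / 2) ^ m := by
          rw [lintegral_add_left (meas b)]
          simp only [lintegral_const, measure_univ, mul_one]
      _ ≤ _ := by
          refine (add_le_add_left (ih (by omega)) _).trans (le_of_eq ?_)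
          push_cast; ring
    refine lintegral_pi_step (j := ⟨b, hb⟩) _ (meas _) ((meas b).add_const _) fun W => ?_
    have hr : ∀ w, hseq A (Function.update W ⟨b, hb⟩ w) x b = hseq A W x b := fun w =>
      hseq_update A W x ⟨b, hb⟩ w (le_refl b)
    have hl : ∀ w, hseq A (Function.update W ⟨b, hb⟩ w) x (b + 1) =
        relu (mulVec w (hseq A W x b)) := by
      intro w
      have hw := Wat_update_self W ⟨b, hb⟩ w
      simp only at hw
      simp only [hseq, hb, if_true, hw, hr]
    simp only [hr, hl, lintegral_const, measure_univ, mul_one]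
    by_cases h0 : hseq A W x b = 0
    · simp only [h0, if_true]
      refine le_trans ?_ le_self_add
      calc _ ≤ ∫⁻ _, (1 : ENNReal) ∂(gaussMat m m (2 / m)) := by
            refine lintegral_mono fun w => ?_
            split_ifs <;> simp
        _ = 1 := by simp
    · simp only [h0, if_false, zero_add]
      refine layer_dead ?_ h0
      positivity

instance : IsProbabilityMeasure (initMeasure 𝔡 m d L) := by
  unfold initMeasure; infer_instance

lemma lintegral_initMeasure {F : (Fin m → Fin 𝔡 → ℝ) ×
      (Fin L → Fin m → Fin m → ℝ) × (Fin d → Fin m → ℝ) → ENNReal} (hF : Measurable F) :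
    ∫⁻ z, F z ∂(initMeasure 𝔡 m d L) = ∫⁻ A, ∫⁻ W, ∫⁻ B, F (A, W, B)
        ∂(gaussMat d m (1 / d)) ∂(Measure.pi fun _ : Fin L => gaussMat m m (2 / m))
        ∂(gaussMat m 𝔡 (2 / m)) := by
  rw [initMeasure, lintegral_prod _ hF.aemeasurable]
  refine lintegral_congr fun A => ?_
  have h : Measurable fun y => F (A, y) := hF.comp measurable_prodMk_left
  rw [lintegral_prod _ h.aemeasurable]

lemma dead_prob (hm : 0 < m) (hL : 0 < L) {x : Fin 𝔡 → ℝ} (hx : x ≠ 0) :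
    initMeasure 𝔡 m d L {z | hseq z.1 z.2.1 x (L - 1) = 0} ≤
      L * ENNReal.ofReal (1 / 2) ^ m := by
  have hms : MeasurableSet {z : (Fin m → Fin 𝔡 → ℝ) ×
      (Fin L → Fin m → Fin m → ℝ) × (Fin d → Fin m → ℝ) | hseq z.1 z.2.1 x (L - 1) = 0} :=
    measurable_dead measurable_fst (measurable_fst.comp measurable_snd) x _
  have hf : Measurable fun z : (Fin m → Fin 𝔡 → ℝ) ×
      (Fin L → Fin m → Fin m → ℝ) × (Fin d → Fin m → ℝ) =>
      (if hseq z.1 z.2.1 x (L - 1) = 0 then (1 : ENNReal) else 0) :=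
    Measurable.ite hms measurable_const measurable_const
  have hv : (2 / m : NNReal) ≠ 0 := by positivity
  calc _ = ∫⁻ z, (if hseq z.1 z.2.1 x (L - 1) = 0 then (1 : ENNReal) else 0)
        ∂(initMeasure 𝔡 m d L) := by
        rw [← lintegral_indicator_one hms]
        exact lintegral_congr fun z => by simp [Set.indicator]
    _ = ∫⁻ A, ∫⁻ W, ∫⁻ _, (if hseq A W x (L - 1) = 0 then (1 : ENNReal) else 0)
        ∂(gaussMat d m (1 / d)) ∂(Measure.pi fun _ : Fin L => gaussMat m m (2 / m))
        ∂(gaussMat m 𝔡 (2 / m)) := by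
        exact lintegral_initMeasure hf
    _ ≤ ∫⁻ A, ((if relu (mulVec A x) = 0 then (1 : ENNReal) else 0) +
          (L - 1 : ℕ) * ENNReal.ofReal (1 / 2) ^ m) ∂(gaussMat m 𝔡 (2 / m)) := by
        refine lintegral_mono fun A => ?_
        simp only [lintegral_const, measure_univ, mul_one]
        exact chain_dead hm A x (Nat.sub_le L 1)
    _ ≤ ENNReal.ofReal (1 / 2) ^ m + (L - 1 : ℕ) * ENNReal.ofReal (1 / 2) ^ m := by
        rw [lintegral_add_right _ measurable_const]
        simp only [lintegral_const, measure_univ, mul_one]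
        gcongr
        exact layer_dead hv hx
    _ = _ := by
        obtain ⟨k, rfl⟩ : ∃ k, L = k + 1 := ⟨L - 1, by omega⟩
        push_cast [Nat.add_sub_cancel]; ring

/-! ### The averaged backward moment -/

/-- The Gaussian average of `‖B D_L W_L ⋯ D_a W_a u‖^(2p)` over `u`, set to `0` when `h_{L-1}`
vanishes. -/
def backAverage (z : (Fin m → Fin 𝔡 → ℝ) ×
      (Fin L → Fin m → Fin m → ℝ) × (Fin d → Fin m → ℝ)) (x : Fin 𝔡 → ℝ) (a p : ℕ) : ENNReal :=
  ∫⁻ u, (if hseq z.1 z.2.1 x (L - 1) = 0 then 0 else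
    ENNReal.ofReal (nsq (mulVec (backMat z.2.2 z.1 z.2.1 x a) u) ^ p)) ∂(rowLaw m 1)

lemma measurable_backAverage_integrand (x : Fin 𝔡 → ℝ) (a p : ℕ) :
    Measurable fun y : ((Fin m → Fin 𝔡 → ℝ) ×
      (Fin L → Fin m → Fin m → ℝ) × (Fin d → Fin m → ℝ)) × (Fin m → ℝ) =>
      (if hseq y.1.1 y.1.2.1 x (L - 1) = 0 then 0 else
        ENNReal.ofReal (nsq (mulVec (backMat y.1.2.2 y.1.1 y.1.2.1 x a) y.2) ^ p)) := by
  have hA : Measurable fun y : ((Fin m → Fin 𝔡 → ℝ) ×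
      (Fin L → Fin m → Fin m → ℝ) × (Fin d → Fin m → ℝ)) × (Fin m → ℝ) => y.1.1 := by fun_prop
  have hW : Measurable fun y : ((Fin m → Fin 𝔡 → ℝ) ×
      (Fin L → Fin m → Fin m → ℝ) × (Fin d → Fin m → ℝ)) × (Fin m → ℝ) => y.1.2.1 := by fun_prop
  have hB : Measurable fun y : ((Fin m → Fin 𝔡 → ℝ) ×
      (Fin L → Fin m → Fin m → ℝ) × (Fin d → Fin m → ℝ)) × (Fin m → ℝ) => y.1.2.2 := by fun_prop
  refine Measurable.ite (measurable_dead hA hW x _) measurable_const ?_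
  refine ((measurable_nsq (measurable_mulVec ?_ measurable_snd)).pow_const p).ennreal_ofReal
  exact measurable_mmul hB (measurable_prodDW hA hW x a L)

lemma measurable_backAverage (x : Fin 𝔡 → ℝ) (a p : ℕ) :
    Measurable fun z : (Fin m → Fin 𝔡 → ℝ) ×
      (Fin L → Fin m → Fin m → ℝ) × (Fin d → Fin m → ℝ) => backAverage z x a p :=
  (measurable_backAverage_integrand x a p).lintegral_prod_right'

lemma lintegral_backAverage {p : ℕ} (hm : 0 < m) (hd : 0 < d) (hp0 : 0 < p) (hp : 8 * p ≤ m)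
    (x : Fin 𝔡 → ℝ) (a : ℕ) :
    ∫⁻ z, backAverage z x a p ∂(initMeasure 𝔡 m d L) ≤
      ENNReal.ofReal (p.factorial * (4 / d) ^ p * √2 ^ d) *
        (ENNReal.ofReal (Real.exp (8 * p ^ 2 / m) ^ L) *
          ENNReal.ofReal ((m * Real.exp 1) ^ p)) := by
  set K := ENNReal.ofReal (p.factorial * (4 / d) ^ p * √2 ^ d) with hK
  have hmeas := measurable_backAverage_integrand (m := m) (L := L) (d := d) x a p
  unfold backAverage
  rw [lintegral_lintegral_swap hmeas.aemeasurable]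
  calc _ ≤ ∫⁻ u, K * ENNReal.ofReal (Real.exp (8 * p ^ 2 / m) ^ L * nsq u ^ p)
        ∂(rowLaw m 1) := ?_
    _ = K * (ENNReal.ofReal (Real.exp (8 * p ^ 2 / m) ^ L) *
          ∫⁻ u, ENNReal.ofReal (nsq u ^ p) ∂(rowLaw m 1)) := by
        rw [lintegral_const_mul' K _ ENNReal.ofReal_ne_top]
        congr 1
        rw [← lintegral_const_mul' _ _ ENNReal.ofReal_ne_top]
        exact lintegral_congr fun u => ENNReal.ofReal_mul (pow_nonneg (Real.exp_pos _).le _)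
    _ ≤ _ := by
        gcongr
        exact input_moment hm hp
  refine lintegral_mono fun u => ?_
  have hmu : Measurable fun z : (Fin m → Fin 𝔡 → ℝ) ×
      (Fin L → Fin m → Fin m → ℝ) × (Fin d → Fin m → ℝ) =>
      (if hseq z.1 z.2.1 x (L - 1) = 0 then 0 else
        ENNReal.ofReal (nsq (mulVec (backMat z.2.2 z.1 z.2.1 x a) u) ^ p)) :=
    hmeas.comp (measurable_id.prodMk measurable_const)
  calc _ = ∫⁻ A, ∫⁻ W, ∫⁻ B, (if hseq A W x (L - 1) = 0 then 0 else
        ENNReal.ofReal (nsq (mulVec (backMat B A W x a) u) ^ p))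
        ∂(gaussMat d m (1 / d)) ∂(Measure.pi fun _ : Fin L => gaussMat m m (2 / m))
        ∂(gaussMat m 𝔡 (2 / m)) := by
        exact lintegral_initMeasure hmu
    _ ≤ ∫⁻ A, ∫⁻ W, K * liveMoment A W x a p L u
        ∂(Measure.pi fun _ : Fin L => gaussMat m m (2 / m)) ∂(gaussMat m 𝔡 (2 / m)) := by
        refine lintegral_mono fun A => lintegral_mono fun W => ?_
        by_cases h0 : hseq A W x (L - 1) = 0
        · simp [h0]
        · simp only [h0, if_false, liveMoment, backMat, mulVec_mmul]
          exact output_moment hd hp0 _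
    _ ≤ ∫⁻ _, K * ENNReal.ofReal (Real.exp (8 * p ^ 2 / m) ^ L * nsq u ^ p)
        ∂(gaussMat m 𝔡 (2 / m)) := by
        refine lintegral_mono fun A => ?_
        simp only
        rw [lintegral_const_mul' _ _ ENNReal.ofReal_ne_top]
        gcongr
        exact chain_moment hm hp A x a u le_rfl
    _ = _ := by simp only [lintegral_const, measure_univ, mul_one]

/-! ### Tail bounds and the choice of `p` -/

lemma lintegral_backAverage_le {p : ℕ} (hm : 0 < m) (hd : 0 < d) (hp0 : 0 < p)
    (hp : 8 * p ≤ m) (hpL : 8 * L * p ≤ m) (hdp : d ≤ p) (x : Fin 𝔡 → ℝ) (a : ℕ) :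
    ∫⁻ z, backAverage z x a p ∂(initMeasure 𝔡 m d L) ≤
      ENNReal.ofReal (p.factorial * (16 * Real.exp 2 * (m / d)) ^ p) := by
  refine (lintegral_backAverage hm hd hp0 hp x a).trans ?_
  have hm' : (0 : ℝ) < m := by exact_mod_cast hm
  have hd' : (0 : ℝ) < d := by exact_mod_cast hd
  rw [← ENNReal.ofReal_mul (by positivity), ← ENNReal.ofReal_mul (by positivity)]
  refine ENNReal.ofReal_le_ofReal ?_
  have h1 : √2 ^ d ≤ (4 : ℝ) ^ p := by
    calc √2 ^ d ≤ √2 ^ p := pow_le_pow_right₀ (by rw [Real.one_le_sqrt]; norm_num) hdp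
      _ ≤ 4 ^ p := by
        gcongr
        rw [Real.sqrt_le_left (by norm_num)]; norm_num
  have h2 : Real.exp (8 * p ^ 2 / m) ^ L ≤ Real.exp 1 ^ p := by
    rw [← Real.exp_nat_mul, ← Real.exp_nat_mul, Real.exp_le_exp, mul_one, ← mul_div_assoc,
      div_le_iff₀ hm']
    have : (8 * L * p : ℝ) ≤ m := by exact_mod_cast hpL
    nlinarith [(Nat.cast_nonneg p : (0 : ℝ) ≤ p)]
  calc _ ≤ (p.factorial * (4 / d) ^ p * 4 ^ p) * (Real.exp 1 ^ p * (m * Real.exp 1) ^ p) := by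
        gcongr
    _ = p.factorial * ((4 / d) * 4 * (Real.exp 1 * (m * Real.exp 1))) ^ p := by
        simp only [mul_pow]; ring
    _ = _ := by
        have : Real.exp 2 = Real.exp 1 * Real.exp 1 := by rw [← Real.exp_add]; norm_num
        rw [this]
        congr 2
        field_simp
        norm_num

lemma backAverage_tail {p : ℕ} (hm : 0 < m) (hd : 0 < d) (hp0 : 0 < p)
    (hp : 8 * p ≤ m) (hpL : 8 * L * p ≤ m) (hdp : d ≤ p) (x : Fin 𝔡 → ℝ) (a : ℕ) :
    initMeasure 𝔡 m d L {z | ENNReal.ofReal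
        (p.factorial * ((4 * Real.exp 9) ^ 2 * (m / d)) ^ p) ≤ backAverage z x a p} ≤
      ENNReal.ofReal (Real.exp (-(16 * p))) := by
  have hm' : (0 : ℝ) < m := by exact_mod_cast hm
  have hd' : (0 : ℝ) < d := by exact_mod_cast hd
  have hpos : (0 : ℝ) < p.factorial * ((4 * Real.exp 9) ^ 2 * (m / d)) ^ p := by positivity
  refine (meas_ge_le_lintegral_div (measurable_backAverage x a p).aemeasurable
    (ENNReal.ofReal_pos.2 hpos).ne' ENNReal.ofReal_ne_top).trans ?_
  refine ENNReal.div_le_of_le_mul ?_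
  refine (lintegral_backAverage_le hm hd hp0 hp hpL hdp x a).trans (le_of_eq ?_)
  rw [← ENNReal.ofReal_mul (Real.exp_pos _).le]
  congr 1
  have h1 : Real.exp (-(16 * p)) = Real.exp (-16) ^ p := by
    rw [← Real.exp_nat_mul]; congr 1; ring
  have h2 : Real.exp 2 = Real.exp (-16) * Real.exp 9 ^ 2 := by
    rw [← Real.exp_nat_mul, ← Real.exp_add]; norm_num
  rw [h1, h2, mul_left_comm (Real.exp (-16) ^ p), ← mul_pow]
  congr 2
  ring

lemma bound_of_backAverage {p : ℕ} (hp0 : p ≠ 0) {x : Fin 𝔡 → ℝ} {a : ℕ} {C : ℝ} (hC : 0 ≤ C)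
    {z : (Fin m → Fin 𝔡 → ℝ) × (Fin L → Fin m → Fin m → ℝ) × (Fin d → Fin m → ℝ)}
    (hz : hseq z.1 z.2.1 x (L - 1) ≠ 0)
    (hR : backAverage z x a p ≤ ENNReal.ofReal (p.factorial * (C ^ 2 * (m / d)) ^ p))
    (v : Fin d → ℝ) :
    l2 (mulVec (transpose (backMat z.2.2 z.1 z.2.1 x a)) v) ≤ C * √(m / d) * l2 v := by
  set N := backMat z.2.2 z.1 z.2.1 x a
  have hq : (0 : ℝ) ≤ C ^ 2 * (m / d) := by positivity
  have hfac : (0 : ℝ) < p.factorial := by exact_mod_cast p.factorial_pos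
  have h1 : ENNReal.ofReal (p.factorial * nsq (mulVec (transpose N) v) ^ p) ≤
      ENNReal.ofReal (p.factorial * (C ^ 2 * (m / d)) ^ p * nsq v ^ p) := by
    refine (transpose_le_average N v).trans ?_
    rw [ENNReal.ofReal_mul (by positivity)]
    gcongr
    simpa only [backAverage, hz, if_false] using hR
  rw [ENNReal.ofReal_le_ofReal_iff (by have := nsq_nonneg v; positivity), mul_assoc,
    mul_le_mul_iff_right₀ hfac, ← mul_pow, pow_le_pow_iff_left₀ (nsq_nonneg _)
    (mul_nonneg hq (nsq_nonneg v)) hp0] at h1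
  rw [l2_eq, l2_eq]
  calc _ ≤ √(C ^ 2 * (m / d) * nsq v) := Real.sqrt_le_sqrt h1
    _ = _ := by
      rw [Real.sqrt_mul hq, Real.sqrt_mul (sq_nonneg C), Real.sqrt_sq hC]

lemma union_numeric {n m L : ℕ} (hL : 2 ≤ L) (hn : 0 < n)
    (hbig : 2 * (L : ℝ) ≤ m) (hlog : Real.log (n * L) ≤ m / (4 * L)) :
    (n : ℝ) * (L * (1 / 2) ^ m + L * Real.exp (-(m / L))) ≤ Real.exp (-(1 / 4 * m / L)) := by
  have hL' : (2 : ℝ) ≤ L := by exact_mod_cast hL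
  have hn' : (0 : ℝ) < n := by exact_mod_cast hn
  set t : ℝ := m / L with ht
  have hnL : (n : ℝ) * L ≤ Real.exp (t / 4) := by
    rw [← Real.log_le_iff_le_exp (by positivity)]
    refine hlog.trans (le_of_eq ?_)
    rw [ht]; field_simp
  have hhalf : (1 / 2 : ℝ) ^ m ≤ Real.exp (-t) := by
    have h1 : (1 / 2 : ℝ) ≤ Real.exp (-(1 / 2)) := by
      have := Real.add_one_le_exp (-(1 / 2) : ℝ)
      linarith
    calc (1 / 2 : ℝ) ^ m ≤ Real.exp (-(1 / 2)) ^ m := by gcongr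
      _ = Real.exp (-(m / 2)) := by rw [← Real.exp_nat_mul]; congr 1; ring
      _ ≤ _ := by
        rw [Real.exp_le_exp, neg_le_neg_iff, ht]
        gcongr
  have ht2 : 2 ≤ t := by
    rw [ht, le_div_iff₀ (by linarith)]; exact hbig
  have h2 : (2 : ℝ) ≤ Real.exp (t / 2) := by
    have := Real.add_one_le_exp (t / 2)
    linarith
  calc _ ≤ (n : ℝ) * (L * Real.exp (-t) + L * Real.exp (-t)) := by gcongr
    _ = (n * L) * 2 * Real.exp (-t) := by ring
    _ ≤ Real.exp (t / 4) * Real.exp (t / 2) * Real.exp (-t) := by gcongr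
    _ = _ := by
      rw [← Real.exp_add, ← Real.exp_add, ht]; congr 1; ring

/-- Lemma 7.3 b, backward propagation bound, spectral version. -/
theorem statement9 :
    ∃ C c : ℝ, 0 < C ∧ 0 < c ∧
      ∀ (𝔡 m d L n : ℕ) (h𝔡 : 0 < 𝔡) (hL : 2 ≤ L) (hm : 0 < m) (hd : 0 < d) (hn : 0 < n)
        (x : Fin n → Fin 𝔡 → ℝ), (∀ i, l2 (x i) = 1) →
        C * (n : ℝ) * (L : ℝ) * Real.log ((n : ℝ) * (L : ℝ)) ≤ (m : ℝ) →
        (d : ℝ) ≤ (m : ℝ) / (C * (L : ℝ) * Real.log m) →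
        ENNReal.ofReal (1 - Real.exp (-(c * (m : ℝ) / (L : ℝ)))) ≤
          initMeasure 𝔡 m d L
            {z | ∀ (i : Fin n) (a : ℕ), 1 ≤ a → a ≤ L →
              ∀ v : Fin d → ℝ,
                l2 (mulVec (transpose (backMat z.2.2 z.1 z.2.1 (x i) a)) v) ≤
                  C * Real.sqrt ((m : ℝ) / (d : ℝ)) * l2 v} := by
  refine ⟨4 * Real.exp 9, 1 / 4, by positivity, by norm_num, ?_⟩
  intro 𝔡 m d L n h𝔡 hL hm hd hn x hx hmC hdC
  set C : ℝ := 4 * Real.exp 9 with hC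
  have hL' : (2 : ℝ) ≤ L := by exact_mod_cast hL
  have hn' : (1 : ℝ) ≤ n := by exact_mod_cast hn
  have hd' : (1 : ℝ) ≤ d := by exact_mod_cast hd
  have hm' : (0 : ℝ) < m := by exact_mod_cast hm
  have hC40 : (40 : ℝ) ≤ C := by
    have := Real.add_one_le_exp (9 : ℝ)
    rw [hC]; linarith
  have hnL : (2 : ℝ) ≤ n * L := by nlinarith
  have hlog : (1 / 2 : ℝ) ≤ Real.log (n * L) := by
    have h1 := Real.log_two_gt_d9
    have h2 : Real.log 2 ≤ Real.log (n * L) := Real.log_le_log (by norm_num) hnL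
    linarith
  have hm20 : 20 * (L : ℝ) ≤ m := by
    calc 20 * (L : ℝ) = 40 * 1 * L * (1 / 2) := by ring
      _ ≤ C * n * L * Real.log (n * L) := by gcongr
      _ ≤ m := hmC
  have hlogm : 1 ≤ Real.log m := by
    rw [Real.le_log_iff_exp_le hm']
    have := Real.exp_one_lt_d9
    linarith
  have hdm : (d : ℝ) * (8 * L) ≤ m := by
    rw [le_div_iff₀ (by positivity)] at hdC
    refine le_trans ?_ hdC
    have : (8 * L : ℝ) * 1 ≤ C * L * Real.log m := by gcongr; linarith
    rw [mul_one] at this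
    gcongr
  have hlognL : Real.log (n * L) ≤ m / (4 * L) := by
    rw [le_div_iff₀ (by positivity)]
    refine le_trans ?_ hmC
    have h4 : (4 * 1 * L : ℝ) ≤ C * n * L := by gcongr; linarith
    nlinarith
  -- the moment exponent: the largest `p` with `8 L p ≤ m`
  set p : ℕ := m / (8 * L) with hp
  have hdp : d ≤ p := (Nat.le_div_iff_mul_le (by omega)).2 (by exact_mod_cast hdm)
  have hp0 : 0 < p := lt_of_lt_of_le hd hdp
  have hpL : 8 * L * p ≤ m := Nat.mul_div_le m (8 * L)
  have hp8 : 8 * p ≤ m := by nlinarith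
  have hpm : (m : ℝ) / L ≤ 16 * p := by
    rw [div_le_iff₀ (by linarith)]
    have h1 : m < 8 * L * (p + 1) := Nat.lt_mul_div_succ m (by omega)
    have h2 : m ≤ 16 * p * L := by nlinarith
    exact_mod_cast h2
  have hx0 : ∀ i, x i ≠ 0 := by
    intro i h0
    have := hx i
    simp [h0, l2] at this
  set S := {z : (Fin m → Fin 𝔡 → ℝ) × (Fin L → Fin m → Fin m → ℝ) × (Fin d → Fin m → ℝ) |
    ∀ (i : Fin n) (a : ℕ), 1 ≤ a → a ≤ L → ∀ v : Fin d → ℝ,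
      l2 (mulVec (transpose (backMat z.2.2 z.1 z.2.1 (x i) a)) v) ≤
        C * Real.sqrt ((m : ℝ) / (d : ℝ)) * l2 v} with hS
  let dead : Fin n → Set ((Fin m → Fin 𝔡 → ℝ) ×
      (Fin L → Fin m → Fin m → ℝ) × (Fin d → Fin m → ℝ)) :=
    fun i => {z | hseq z.1 z.2.1 (x i) (L - 1) = 0}
  let bad : Fin n → Fin L → Set ((Fin m → Fin 𝔡 → ℝ) ×
      (Fin L → Fin m → Fin m → ℝ) × (Fin d → Fin m → ℝ)) :=
    fun i k => {z | ENNReal.ofReal (p.factorial * (C ^ 2 * (m / d)) ^ p) ≤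
      backAverage z (x i) (k + 1) p}
  have hsub : Sᶜ ⊆ ⋃ i, (dead i ∪ ⋃ k, bad i k) := by
    intro z hz
    by_contra hcon
    refine hz fun i a ha haL v => ?_
    simp only [Set.mem_iUnion, Set.mem_union, not_exists, not_or] at hcon
    obtain ⟨h1, h2⟩ := hcon i
    have h3 := h2 ⟨a - 1, by omega⟩
    simp only [bad, Set.mem_ofPred_eq, Nat.sub_add_cancel ha, not_le] at h3
    exact bound_of_backAverage hp0.ne' (by positivity) h1 h3.le v
  have hSc : initMeasure 𝔡 m d L Sᶜ ≤ ENNReal.ofReal (Real.exp (-(1 / 4 * m / L))) := by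
    calc _ ≤ initMeasure 𝔡 m d L (⋃ i, (dead i ∪ ⋃ k, bad i k)) := measure_mono hsub
      _ ≤ ∑ i, initMeasure 𝔡 m d L (dead i ∪ ⋃ k, bad i k) := measure_iUnion_fintype_le _ _
      _ ≤ ∑ _i : Fin n, (L * ENNReal.ofReal (1 / 2) ^ m +
          L * ENNReal.ofReal (Real.exp (-(m / L)))) := by
          refine Finset.sum_le_sum fun i _ => (measure_union_le _ _).trans ?_
          refine add_le_add (dead_prob hm (by omega) (hx0 i)) ?_
          refine (measure_iUnion_fintype_le _ _).trans ?_
          calc _ ≤ ∑ _k : Fin L, ENNReal.ofReal (Real.exp (-(m / L))) := by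
                refine Finset.sum_le_sum fun k _ => ?_
                refine (backAverage_tail hm hd hp0 hp8 hpL hdp (x i) (k + 1)).trans ?_
                exact ENNReal.ofReal_le_ofReal (Real.exp_le_exp.2 (by linarith))
            _ = _ := by simp
      _ = ENNReal.ofReal ((n : ℝ) * (L * (1 / 2) ^ m + L * Real.exp (-(m / L)))) := by
          rw [ENNReal.ofReal_mul (by positivity), ENNReal.ofReal_add (by positivity)
            (by positivity), ENNReal.ofReal_mul (by positivity), ENNReal.ofReal_mul
            (by positivity), ENNReal.ofReal_pow (by norm_num)]
          simp [mul_add]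
      _ ≤ _ := ENNReal.ofReal_le_ofReal (union_numeric hL hn (by linarith) hlognL)
  rw [ENNReal.ofReal_sub _ (Real.exp_pos _).le, ENNReal.ofReal_one, tsub_le_iff_right,
    ← measure_univ (μ := initMeasure 𝔡 m d L), ← Set.union_compl_self S]
  exact (measure_union_le _ _).trans (by gcongr)

end DNNPaper
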